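/- arXiv:2404.06308 — 2 statements merged into one kernel-verified Lean document; each statement's English description precedes it below -/
import Mathlib

section
/- (Theorem A) Let m ∈ ℕ and let w be a (1/(m+1))-concise group-word. If G is an FC(w)-group, then the iterated commutator subgroup [w(G), G, ..., G] (with G repeated m times) is FC-embedded in G. -/
/-- The set of `w`-values in `G`: images of the word `w` (an element of the free
group on `n` generators) under all homomorphisms `FreeGroup (Fin n) →* G`. -/
def wValues {n : ℕ} (w : FreeGroup (Fin n)) (G : Type*) [Group G] : Set G :=
  Set.range fun g : Fin n → G => FreeGroup.lift g w

/-- `G_w^* = G_w ∪ G_w⁻¹`. -/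
def wValuesStar {n : ℕ} (w : FreeGroup (Fin n)) (G : Type*) [Group G] : Set G :=
  wValues w G ∪ (wValues w G)⁻¹

/-- The verbal subgroup `w(G)` generated by all `w`-values. -/
def verbalSubgroup {n : ℕ} (w : FreeGroup (Fin n)) (G : Type*) [Group G] : Subgroup G :=
  Subgroup.closure (wValues w G)

/-- The iterated commutator subgroup `[H, G, ..., G]` with `G` repeated `k` times. -/
def iterCommSub (G : Type*) [Group G] (H : Subgroup G) : ℕ → Subgroup G
  | 0 => H
  | k + 1 => ⁅iterCommSub G H k, (⊤ : Subgroup G)⁆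

/-- The set of conjugates `x^S = {g⁻¹ x g : g ∈ S}`. -/
def conjSet {G : Type*} [Group G] (x : G) (S : Set G) : Set G :=
  (fun g => g⁻¹ * x * g) '' S

/-- `G` is an `FC(w)`-group: every conjugacy set `x^{G_w}` is finite. -/
def IsFCw {n : ℕ} (w : FreeGroup (Fin n)) (G : Type*) [Group G] : Prop :=
  ∀ x : G, (conjSet x (wValues w G)).Finite

/-- `G` is a `BFC(w)`-group: the sets `x^{G_w}` are finite of bounded size. -/
def IsBFCw {n : ℕ} (w : FreeGroup (Fin n)) (G : Type*) [Group G] : Prop :=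
  ∃ c : ℕ, ∀ x : G,
    (conjSet x (wValues w G)).Finite ∧ (conjSet x (wValues w G)).ncard ≤ c

/-- A subgroup `H` is `FC`-embedded in `G` if `x^H` is finite for every `x ∈ G`. -/
def IsFCEmbedded {G : Type*} [Group G] (H : Subgroup G) : Prop :=
  ∀ x : G, (conjSet x (H : Set G)).Finite

/-- A subgroup `H` is `BFC`-embedded in `G` if the sets `x^H` are finite of bounded size. -/
def IsBFCEmbedded {G : Type*} [Group G] (H : Subgroup G) : Prop :=
  ∃ d : ℕ, ∀ x : G,
    (conjSet x (H : Set G)).Finite ∧ (conjSet x (H : Set G)).ncard ≤ d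

/-- A word `w` is `(1/k)`-concise (`k ≥ 1`): in every group `G` with `G_w` finite,
the subgroup `[w(G), G, ..., G]` (with `G` repeated `k - 1` times) is finite. -/
def IsFracConcise {n : ℕ} (w : FreeGroup (Fin n)) (k : ℕ) : Prop :=
  ∀ (G : Type*) [Group G], (wValues w G).Finite →
    ((iterCommSub G (verbalSubgroup w G) (k - 1) : Subgroup G) : Set G).Finite

/-- A word `w` is `0`-concise: in every group `G` with `G_w` finite, some iterated
commutator subgroup `[w(G), G, ..., G]` is finite. -/
def IsZeroConcise {n : ℕ} (w : FreeGroup (Fin n)) : Prop :=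
  ∀ (G : Type*) [Group G], (wValues w G).Finite →
    ∃ k : ℕ, ((iterCommSub G (verbalSubgroup w G) k : Subgroup G) : Set G).Finite

/-- The commutator `[a, b] = a⁻¹ b⁻¹ a b`. -/
def pcomm {G : Type*} [Group G] (a b : G) : G := a⁻¹ * b⁻¹ * a * b

/-- The word `w(x_1, ..., x_n)` viewed in the free group on `n + m` generators. -/
def extendWord {n : ℕ} (m : ℕ) (w : FreeGroup (Fin n)) : FreeGroup (Fin (n + m)) :=
  FreeGroup.map (Fin.castAdd m) w

/-- The word `v = [w(x_1, ..., x_n), x_{n+1}, ..., x_{n+m}]`. -/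
def commWord {n : ℕ} (m : ℕ) (w : FreeGroup (Fin n)) : FreeGroup (Fin (n + m)) :=
  (List.ofFn fun i : Fin m => FreeGroup.of (Fin.natAdd n i)).foldl pcomm (extendWord m w)

/-- The iterated commutator `[y, b, ..., b]` with `b` repeated `k` times. -/
def iterPcomm {G : Type*} [Group G] (y b : G) : ℕ → G
  | 0 => y
  | k + 1 => pcomm (iterPcomm y b k) b

/-!
Call `T ⊆ G` an FC-set if `x ^ T` is finite for every `x ∈ G`. In a finitely generated group, `T` is
an FC-set exactly when it has finite image in the group of inner automorphisms, so for a finitely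
generated subgroup `X` the word `w` has finitely many values in `Inn X`, and conciseness of `w`
applied to `Inn X` shows that `[w(X), X, ..., X]` is FC-embedded in `X`.

To reduce to this case, `[w(G), G, ..., G]` is generated by a conjugation-invariant FC-set, obtained
from `G_w` by taking inverses and products. Inverses are the delicate point: if `a, b` lie in a
subgroup `X` generated by finitely many elements of a conjugation-invariant FC-set, then `[a, b]`
depends only on the images of `a` and `b` in `Inn X`, where every conjugacy class is finite; hence
`[a, b]` has finitely many conjugates in `X`. Finally, if `S` is a conjugation-invariant FC-set then
`x ^ ⟨S⟩ = x ^ ⟨F⟩` for some finite `F ⊆ S`, and `F ⊆ [w(X), X, ..., X]` for some finitely generated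
`X` containing `x`.
-/

open scoped Pointwise commutatorElement

universe u

theorem finite_image_of_factorsThrough {α β γ : Type*} {f : α → β} {g : α → γ} {s : Set α}
    (hgf : g.FactorsThrough f) (hs : (f '' s).Finite) : (g '' s).Finite := by
  rcases s.eq_empty_or_nonempty with rfl | ⟨a, -⟩
  · simp
  · have : Nonempty γ := ⟨g a⟩
    obtain ⟨e, rfl⟩ := (Function.factorsThrough_iff g).1 hgf
    rw [Set.image_comp]
    exact hs.image e

section Conjugates

variable {G H : Type*} [Group G] [Group H]

theorem conjSet_mono (x : G) {S T : Set G} (h : S ⊆ T) : conjSet x S ⊆ conjSet x T :=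
  Set.image_mono h

theorem image_conjSet (f : G →* H) (x : G) (S : Set G) :
    f '' conjSet x S = conjSet (f x) (f '' S) := by
  simp only [conjSet, Set.image_image, map_mul, map_inv]

theorem finite_conjSet_of_mem_closure {E S : Set G} (hE : ∀ e ∈ E, (conjSet e S).Finite) {a : G}
    (ha : a ∈ Subgroup.closure E) : (conjSet a S).Finite := by
  induction ha using Subgroup.closure_induction with
  | mem e he => exact hE e he
  | one => exact (Set.finite_singleton 1).subset (by rintro _ ⟨g, -, rfl⟩; simp)
  | mul a b _ _ iha ihb =>
    refine (iha.mul ihb).subset ?_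
    rintro _ ⟨g, hg, rfl⟩
    exact ⟨_, ⟨g, hg, rfl⟩, _, ⟨g, hg, rfl⟩, by group⟩
  | inv a _ iha =>
    refine iha.inv.subset ?_
    rintro _ ⟨g, hg, rfl⟩
    exact ⟨g, hg, by group⟩

-- For `g ∈ M`, conjugation by `g` maps the finite set `h ^ M` injectively into itself, hence onto.
theorem conjSet_inv_subset {M : Submonoid G} {h : G} (hfin : (conjSet h (M : Set G)).Finite) :
    conjSet h (M : Set G)⁻¹ ⊆ conjSet h (M : Set G) := by
  rintro _ ⟨g, hg, rfl⟩
  have hmaps : Set.MapsTo (MulAut.conj g) (conjSet h M) (conjSet h M) := by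
    rintro _ ⟨c, hc, rfl⟩
    exact ⟨c * g⁻¹, mul_mem hc hg, by simp only [MulAut.conj_apply]; group⟩
  have hsurj := ((hfin.injOn_iff_bijOn_of_mapsTo hmaps).1 (MulAut.conj g).injective.injOn).surjOn
  have hh : h ∈ conjSet h (M : Set G) := ⟨1, one_mem M, by simp⟩
  obtain ⟨y, hy, hyh⟩ := hsurj hh
  have : g⁻¹ * h * g = y := by rw [← hyh, MulAut.conj_apply]; group
  simpa only [this] using hy

theorem commutatorElement_factorsThrough_conj :
    Function.FactorsThrough (fun p : G × G => ⁅p.1, p.2⁆) (Prod.map MulAut.conj MulAut.conj) := by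
  rintro ⟨a, b⟩ ⟨a', b'⟩ h
  obtain ⟨ha, hb⟩ := Prod.mk.inj h
  calc ⁅a, b⁆ = MulAut.conj a b * b⁻¹ := rfl
    _ = a' * MulAut.conj b a'⁻¹ := by rw [ha]; simp only [MulAut.conj_apply]; group
    _ = ⁅a', b'⁆ := by rw [hb, commutatorElement_def]; simp only [MulAut.conj_apply]; group

theorem finite_conjSet_commutatorElement {a b : G} {S : Set G}
    (ha : (conjSet (MulAut.conj a) (MulAut.conj '' S)).Finite)
    (hb : (conjSet (MulAut.conj b) (MulAut.conj '' S)).Finite) : (conjSet ⁅a, b⁆ S).Finite := by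
  have hfin : (Prod.map MulAut.conj MulAut.conj '' (conjSet a S ×ˢ conjSet b S)).Finite := by
    rw [Set.prodMap_image_prod, image_conjSet, image_conjSet]
    exact ha.prod hb
  refine (finite_image_of_factorsThrough commutatorElement_factorsThrough_conj hfin).subset ?_
  rintro _ ⟨g, hg, rfl⟩
  refine ⟨(g⁻¹ * a * g, g⁻¹ * b * g), ⟨⟨g, hg, rfl⟩, ⟨g, hg, rfl⟩⟩, ?_⟩
  simp only [commutatorElement_def]
  group

end Conjugates

/-- A subset of a group that is stable under conjugation, that is, a union of conjugacy classes;
subsets of this kind, such as `G_w`, generate normal subgroups. -/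
def IsConjInvariant {G : Type*} [Group G] (T : Set G) : Prop :=
  ∀ t ∈ T, ∀ g : G, g * t * g⁻¹ ∈ T

theorem isConjInvariant_univ {G : Type*} [Group G] : IsConjInvariant (Set.univ : Set G) :=
  fun t _ g => Set.mem_univ (g * t * g⁻¹)

namespace IsConjInvariant

variable {G H : Type*} [Group G] [Group H] {S T : Set G}

theorem preimage {T : Set H} (hT : IsConjInvariant T) (f : G →* H) : IsConjInvariant (f ⁻¹' T) :=
  fun t ht g => by simpa using hT (f t) ht (f g)

theorem inv (hT : IsConjInvariant T) : IsConjInvariant T⁻¹ :=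
  fun t ht g => by simpa [mul_assoc] using hT _ ht g

theorem union (hS : IsConjInvariant S) (hT : IsConjInvariant T) : IsConjInvariant (S ∪ T) :=
  fun t ht g => ht.imp (hS t · g) (hT t · g)

theorem image2_commutator (hS : IsConjInvariant S) (hT : IsConjInvariant T) :
    IsConjInvariant (Set.image2 (⁅·, ·⁆) S T) := by
  rintro _ ⟨s, hs, t, ht, rfl⟩ g
  exact ⟨_, hS s hs g, _, hT t ht g, (conjugate_commutatorElement s t g).symm⟩

theorem normal_closure (hT : IsConjInvariant T) : (Subgroup.closure T).Normal := by
  refine ⟨fun a ha g => ?_⟩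
  have hmap : (Subgroup.closure T).map (MulAut.conj g).toMonoidHom ≤ Subgroup.closure T := by
    rw [MonoidHom.map_closure]
    refine Subgroup.closure_mono ?_
    rintro _ ⟨t, ht, rfl⟩
    exact hT t ht g
  exact hmap ⟨a, ha, rfl⟩

theorem closure_image2_commutator (hT : IsConjInvariant T) :
    Subgroup.closure (Set.image2 (⁅·, ·⁆) T Set.univ) = ⁅Subgroup.closure T, (⊤ : Subgroup G)⁆ := by
  refine le_antisymm ?_ (Subgroup.commutator_le.2 fun a ha y _ => ?_)
  · rw [Subgroup.closure_le]
    rintro _ ⟨t, ht, y, -, rfl⟩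
    exact Subgroup.commutator_mem_commutator (Subgroup.subset_closure ht) (Subgroup.mem_top y)
  · have hnormal := (hT.image2_commutator isConjInvariant_univ).normal_closure
    induction ha using Subgroup.closure_induction with
    | mem t ht => exact Subgroup.subset_closure ⟨t, ht, y, trivial, rfl⟩
    | one => simp
    | mul a b _ _ iha ihb =>
      rw [commutatorElement_mul_left_eq_conj_mul]
      exact mul_mem (hnormal.conj_mem _ ihb a) iha
    | inv a _ iha =>
      rw [commutatorElement_inv_left, ← commutatorElement_inv]
      exact hnormal.conj_mem' _ (inv_mem iha) a

theorem exists_finite_conjSet_submonoidClosure_subset (hT : IsConjInvariant T) {x : G}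
    (hx : (conjSet x T).Finite) : ∃ F ⊆ T, F.Finite ∧
      conjSet x (Submonoid.closure T) ⊆ conjSet x (Submonoid.closure F) := by
  obtain ⟨F, hFT, hF⟩ := Set.exists_subset_bijOn T fun g => g⁻¹ * x * g
  refine ⟨F, hFT, hF.finite_iff_finite.2 hx, ?_⟩
  rintro _ ⟨a, ha, rfl⟩
  induction ha using Submonoid.closure_induction_right with
  | one => exact ⟨1, one_mem _, rfl⟩
  | mul_right a _ t ht ih =>
    -- If `x ^ a = x ^ b` and `x ^ (b t b⁻¹) = x ^ f` with `f ∈ F`, then `x ^ (a t) = x ^ (f b)`.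
    obtain ⟨b, hb, hab⟩ := ih
    obtain ⟨f, hf, hfx⟩ := hF.surjOn ⟨_, hT t ht b, rfl⟩
    refine ⟨f * b, mul_mem (Submonoid.subset_closure hf) hb, ?_⟩
    beta_reduce at hab hfx ⊢
    calc (f * b)⁻¹ * x * (f * b) = b⁻¹ * (f⁻¹ * x * f) * b := by group
      _ = b⁻¹ * ((b * t * b⁻¹)⁻¹ * x * (b * t * b⁻¹)) * b := by rw [hfx]
      _ = t⁻¹ * (b⁻¹ * x * b) * t := by group
      _ = t⁻¹ * (a⁻¹ * x * a) * t := by rw [hab]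
      _ = (a * t)⁻¹ * x * (a * t) := by group

theorem exists_finite_conjSet_closure_subset (hT : IsConjInvariant T) {x : G}
    (hx : (conjSet x (T ∪ T⁻¹)).Finite) : ∃ F ⊆ T, F.Finite ∧
      conjSet x (Subgroup.closure T) ⊆ conjSet x (Subgroup.closure F) := by
  obtain ⟨F, hFT, hF, hsub⟩ := (hT.union hT.inv).exists_finite_conjSet_submonoidClosure_subset hx
  refine ⟨(F ∪ F⁻¹) ∩ T, Set.inter_subset_right, (hF.union hF.inv).inter_of_left T, ?_⟩
  have hle : Submonoid.closure F ≤ (Subgroup.closure ((F ∪ F⁻¹) ∩ T)).toSubmonoid := by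
    rw [Submonoid.closure_le]
    intro f hf
    rcases hFT hf with hfT | hfT
    · exact Subgroup.subset_closure ⟨Or.inl hf, hfT⟩
    · have hf_inv : f⁻¹ ∈ Subgroup.closure ((F ∪ F⁻¹) ∩ T) :=
        Subgroup.subset_closure ⟨Or.inr (Set.inv_mem_inv.2 hf), hfT⟩
      exact (Subgroup.inv_mem_iff _).1 hf_inv
  rw [← Subgroup.coe_toSubmonoid, Subgroup.closure_toSubmonoid]
  exact hsub.trans (conjSet_mono x hle)

end IsConjInvariant

/-- A subset `T` of a group `G` such that `x ^ T = {t⁻¹ x t : t ∈ T}` is finite for every `x : G`.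
For `T = G_w` this is `IsFCw`, and for `T` a subgroup it is `IsFCEmbedded`. -/
def IsFCSet {G : Type*} [Group G] (T : Set G) : Prop :=
  ∀ x : G, (conjSet x T).Finite

theorem isFCSet_of_finite_image_conj {G : Type*} [Group G] {T : Set G}
    (hT : (MulAut.conj '' T).Finite) : IsFCSet T := by
  intro x
  have : conjSet x T = (fun φ : MulAut G => φ⁻¹ x) '' (MulAut.conj '' T) := by
    simp only [conjSet, Set.image_image, MulAut.conj_inv_apply]
  rw [this]
  exact hT.image _

namespace IsFCSet

variable {G H : Type*} [Group G] [Group H] {S T : Set G}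

theorem subset (hT : IsFCSet T) (hST : S ⊆ T) : IsFCSet S :=
  fun x => (hT x).subset (conjSet_mono x hST)

theorem union (hS : IsFCSet S) (hT : IsFCSet T) : IsFCSet (S ∪ T) := by
  intro x
  rw [conjSet, Set.image_union]
  exact (hS x).union (hT x)

theorem mul (hS : IsFCSet S) (hT : IsFCSet T) : IsFCSet (S * T) := by
  intro x
  refine ((hS x).biUnion fun y _ => hT y).subset ?_
  rintro _ ⟨_, ⟨s, hs, t, ht, rfl⟩, rfl⟩
  exact Set.mem_biUnion ⟨s, hs, rfl⟩ ⟨t, ht, by group⟩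

theorem preimage {T : Set H} (hT : IsFCSet T) {f : G →* H} (hf : Function.Injective f) :
    IsFCSet (f ⁻¹' T) := by
  intro x
  refine Set.Finite.of_finite_image ((hT (f x)).subset ?_) hf.injOn
  rw [image_conjSet]
  exact conjSet_mono _ (Set.image_preimage_subset f T)

theorem finite_image_conj [Group.FG G] (hT : IsFCSet T) : (MulAut.conj '' T).Finite := by
  obtain ⟨S, hS, hSfin⟩ := Group.fg_iff.1 ‹Group.FG G›
  have := hSfin.to_subtype
  let restrictConj (g : G) (s : S) : G := (MulAut.conj g)⁻¹ s
  have hfactors : Function.FactorsThrough MulAut.conj restrictConj := by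
    intro g h hgh
    have hS' : Set.EqOn (MulAut.conj g)⁻¹.toMonoidHom (MulAut.conj h)⁻¹.toMonoidHom S :=
      fun s hs => congrFun hgh ⟨s, hs⟩
    refine inv_injective (MulEquiv.ext fun y => MonoidHom.eqOn_closure hS' ?_)
    simp [hS]
  refine finite_image_of_factorsThrough hfactors ((Set.Finite.pi fun s : S => hT s).subset ?_)
  rintro _ ⟨t, ht, rfl⟩ s -
  exact ⟨t, ht, (MulAut.conj_inv_apply t (s : G)).symm⟩

theorem finite_conjSet_commutatorElement_of_mem_closure (hT : IsFCSet T) (hTc : IsConjInvariant T)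
    {E : Set G} (hE : E.Finite) (hET : E ⊆ T) {a b : G} (ha : a ∈ Subgroup.closure E)
    (hb : b ∈ Subgroup.closure E) : (conjSet ⁅a, b⁆ (Subgroup.closure E : Set G)).Finite := by
  have := hE.to_subtype
  let X := Subgroup.closure E
  have hInn : (MulAut.conj '' (X.subtype ⁻¹' T)).Finite :=
    (hT.preimage X.subtype_injective).finite_image_conj
  have hgen : ∀ e ∈ X.subtype ⁻¹' E,
      (conjSet (MulAut.conj e) (MulAut.conj '' (Set.univ : Set X))).Finite := by
    intro e he
    rw [← image_conjSet]
    refine hInn.subset (Set.image_mono ?_)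
    rintro _ ⟨g, -, rfl⟩
    simpa using hTc.preimage X.subtype e (hET he) g⁻¹
  have hconj (c : X) : (conjSet (MulAut.conj c) (MulAut.conj '' (Set.univ : Set X))).Finite := by
    refine finite_conjSet_of_mem_closure (Set.forall_mem_image.2 hgen) ?_
    rw [← MonoidHom.map_closure]
    exact Subgroup.mem_map_of_mem _
      ((Subgroup.closure_closure_coe_preimage (k := E)).symm ▸ Subgroup.mem_top c)
  have hcomm := (finite_conjSet_commutatorElement (hconj ⟨a, ha⟩) (hconj ⟨b, hb⟩)).image X.subtype
  rw [image_conjSet, Set.image_univ, Subgroup.coe_subtype, Subtype.range_coe] at hcomm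
  exact hcomm

theorem finite_conjSet_commutatorElement_inv (hT : IsFCSet T) (hTc : IsConjInvariant T)
    {E : Set G} (hE : E.Finite) (hET : E ⊆ T) {a b : G} (ha : a ∈ Subgroup.closure E)
    (hb : b ∈ Subgroup.closure E) : (conjSet ⁅a, b⁆ T⁻¹).Finite := by
  obtain ⟨F, hFT, hF, hsub⟩ := hTc.exists_finite_conjSet_submonoidClosure_subset (hT ⁅a, b⁆)
  have hfin := hT.finite_conjSet_commutatorElement_of_mem_closure hTc (hE.union hF)
    (Set.union_subset hET hFT) (Subgroup.closure_mono Set.subset_union_left ha)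
    (Subgroup.closure_mono Set.subset_union_left hb)
  have hle : Submonoid.closure F ≤ (Subgroup.closure (E ∪ F)).toSubmonoid :=
    Submonoid.closure_le.2 (Set.subset_union_right.trans Subgroup.subset_closure)
  have hmonoid : (conjSet ⁅a, b⁆ (Submonoid.closure T : Set G)).Finite :=
    hfin.subset (hsub.trans (conjSet_mono _ hle))
  exact hmonoid.subset ((conjSet_mono _ (Set.inv_subset_inv.2 Submonoid.subset_closure)).trans
    (conjSet_inv_subset hmonoid))

-- `t x t⁻¹ = (t [x, t⁻¹] t⁻¹) x`, where `[x, t⁻¹] = x (x ^ t)⁻¹` takes finitely many values.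
theorem finite_conjSet_inv_of_commutatorElement (hT : IsFCSet T) {x : G}
    (hx : ∀ t ∈ T, (conjSet ⁅x, t⁻¹⁆ T⁻¹).Finite) : (conjSet x T⁻¹).Finite := by
  have hcover : (⋃ y ∈ conjSet x T, (· * x) '' conjSet (x * y⁻¹) T⁻¹).Finite := by
    refine (hT x).biUnion ?_
    rintro _ ⟨t, ht, rfl⟩
    have : x * (t⁻¹ * x * t)⁻¹ = ⁅x, t⁻¹⁆ := by rw [commutatorElement_def]; group
    rw [this]
    exact (hx t ht).image _
  refine hcover.subset ?_
  rintro _ ⟨t, ht, rfl⟩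
  exact Set.mem_biUnion ⟨t⁻¹, ht, rfl⟩ ⟨_, ⟨t, ht, rfl⟩, by group⟩

theorem inv (hT : IsFCSet T) (hTc : IsConjInvariant T) : IsFCSet T⁻¹ := by
  refine fun x => hT.finite_conjSet_inv_of_commutatorElement fun t ht =>
    hT.finite_conjSet_inv_of_commutatorElement fun s hs => ?_
  let E : Set G := {x * t * x⁻¹, t, s}
  have hET : E ⊆ T := by
    rintro _ (rfl | rfl | rfl)
    exacts [hTc t ht x, ht, hs]
  have hmem {e : G} (he : e ∈ E) : e ∈ Subgroup.closure E := Subgroup.subset_closure he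
  have hxt : ⁅x, t⁻¹⁆ ∈ Subgroup.closure E := by
    have : ⁅x, t⁻¹⁆ = (x * t * x⁻¹)⁻¹ * t := by rw [commutatorElement_def]; group
    rw [this]
    exact mul_mem (inv_mem (hmem (by simp [E]))) (hmem (by simp [E]))
  exact hT.finite_conjSet_commutatorElement_inv hTc (Set.toFinite E) hET hxt
    (inv_mem (hmem (by simp [E])))

theorem image2_commutator (hT : IsFCSet T) (hTc : IsConjInvariant T) :
    IsFCSet (Set.image2 (⁅·, ·⁆) T (Set.univ : Set G)) := by
  refine (hT.mul (hT.inv hTc)).subset ?_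
  rintro _ ⟨t, ht, y, -, rfl⟩
  refine ⟨t, ht, y * t⁻¹ * y⁻¹, hTc.inv _ (Set.inv_mem_inv.2 ht) y, ?_⟩
  simp only [commutatorElement_def, mul_assoc]

theorem exists_closure_eq_iterCommSub (hT : IsFCSet T) (hTc : IsConjInvariant T) (k : ℕ) :
    ∃ S : Set G, IsFCSet S ∧ IsConjInvariant S ∧
      Subgroup.closure S = iterCommSub G (Subgroup.closure T) k := by
  induction k with
  | zero => exact ⟨T, hT, hTc, rfl⟩
  | succ k ih =>
    obtain ⟨S, hS, hSc, hclosure⟩ := ih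
    refine ⟨_, hS.image2_commutator hSc, hSc.image2_commutator isConjInvariant_univ, ?_⟩
    rw [hSc.closure_image2_commutator, hclosure, iterCommSub]

end IsFCSet

theorem map_iterCommSub_le {G H : Type*} [Group G] [Group H] (f : G →* H) {A : Subgroup G}
    {B : Subgroup H} (h : A.map f ≤ B) (k : ℕ) :
    (iterCommSub G A k).map f ≤ iterCommSub H B k := by
  induction k with
  | zero => exact h
  | succ k ih =>
    rw [iterCommSub, iterCommSub, Subgroup.map_commutator]
    exact Subgroup.commutator_mono ih le_top

theorem exists_fg_le_mem {G : Type*} [Group G] {X : Subgroup G} (hX : X.FG) (y : G) :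
    ∃ Y : Subgroup G, Y.FG ∧ X ≤ Y ∧ y ∈ Y := by
  refine ⟨X ⊔ Subgroup.closure {y}, ?_, le_sup_left,
    Subgroup.mem_sup_right (Subgroup.subset_closure rfl)⟩
  exact hX.sup ((Subgroup.fg_iff _).2 ⟨{y}, rfl, Set.finite_singleton y⟩)

section Words

variable {n : ℕ} (w : FreeGroup (Fin n)) {G H : Type*} [Group G] [Group H]

theorem map_freeGroupLift (f : G →* H) (v : Fin n → G) :
    f (FreeGroup.lift v w) = FreeGroup.lift (f ∘ v) w := by
  have : f.comp (FreeGroup.lift v) = FreeGroup.lift (f ∘ v) := by ext i; simp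
  rw [← this, MonoidHom.comp_apply]

theorem image_wValues_subset (f : G →* H) : f '' wValues w G ⊆ wValues w H := by
  rintro _ ⟨_, ⟨v, rfl⟩, rfl⟩
  exact ⟨f ∘ v, (map_freeGroupLift w f v).symm⟩

theorem image_wValues_of_surjective {f : G →* H} (hf : Function.Surjective f) :
    f '' wValues w G = wValues w H := by
  refine (image_wValues_subset w f).antisymm ?_
  rintro _ ⟨v, rfl⟩
  obtain ⟨v, rfl⟩ := hf.comp_left v
  exact ⟨_, ⟨v, rfl⟩, map_freeGroupLift w f v⟩

theorem isConjInvariant_wValues : IsConjInvariant (wValues w G) :=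
  fun t ht g => image_wValues_subset w (MulAut.conj g).toMonoidHom ⟨t, ht, rfl⟩

theorem map_verbalSubgroup_le (f : G →* H) :
    (verbalSubgroup w G).map f ≤ verbalSubgroup w H := by
  rw [verbalSubgroup, MonoidHom.map_closure]
  exact Subgroup.closure_mono (image_wValues_subset w f)

/-- The subgroup `[w(X), X, ..., X]` (with `X` repeated `k` times) of a subgroup `X ≤ G`, regarded
as a subgroup of `G`, so that these subgroups can be compared for varying `X`. -/
def iterVerbalComm (k : ℕ) (X : Subgroup G) : Subgroup G :=
  (iterCommSub X (verbalSubgroup w X) k).map X.subtype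

theorem iterVerbalComm_mono (k : ℕ) : Monotone (iterVerbalComm (G := G) w k) := by
  intro X Y hXY
  have := Subgroup.map_mono (f := Y.subtype)
    (map_iterCommSub_le (Subgroup.inclusion hXY) (map_verbalSubgroup_le w _) k)
  rwa [Subgroup.map_map, Subgroup.subtype_comp_inclusion] at this

theorem exists_fg_mem_iterVerbalComm_zero {a : G} (ha : a ∈ wValues w G) :
    ∃ X : Subgroup G, X.FG ∧ a ∈ iterVerbalComm w 0 X := by
  obtain ⟨v, rfl⟩ := ha
  let X := Subgroup.closure (Set.range v)
  let v' (i : Fin n) : X := ⟨v i, Subgroup.subset_closure ⟨i, rfl⟩⟩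
  refine ⟨X, (Subgroup.fg_iff X).2 ⟨_, rfl, Set.finite_range v⟩,
    FreeGroup.lift v' w, Subgroup.subset_closure ⟨v', rfl⟩, ?_⟩
  exact map_freeGroupLift w X.subtype v'

theorem directed_iterVerbalComm_fg (k : ℕ) :
    Directed (· ≤ ·) fun X : {X : Subgroup G // X.FG} => iterVerbalComm w k (X : Subgroup G) :=
  fun X Y => ⟨⟨X ⊔ Y, X.2.sup Y.2⟩, iterVerbalComm_mono w k le_sup_left,
    iterVerbalComm_mono w k le_sup_right⟩

theorem iterCommSub_le_iSup_iterVerbalComm (k : ℕ) :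
    iterCommSub G (verbalSubgroup w G) k ≤
      ⨆ X : {X : Subgroup G // X.FG}, iterVerbalComm w k (X : Subgroup G) := by
  have : Nonempty {X : Subgroup G // X.FG} := ⟨⟨⊥, Subgroup.FG.bot⟩⟩
  induction k with
  | zero =>
    refine (Subgroup.closure_le _).2 fun a ha => ?_
    obtain ⟨X, hX, haX⟩ := exists_fg_mem_iterVerbalComm_zero w ha
    exact Subgroup.mem_iSup_of_mem ⟨X, hX⟩ haX
  | succ k ih =>
    refine Subgroup.commutator_le.2 fun a ha y _ => ?_
    obtain ⟨X, haX⟩ := (Subgroup.mem_iSup_of_directed (directed_iterVerbalComm_fg w k)).1 (ih ha)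
    obtain ⟨Y, hY, hXY, hyY⟩ := exists_fg_le_mem X.2 y
    obtain ⟨a, haY, rfl⟩ := iterVerbalComm_mono w k hXY haX
    exact Subgroup.mem_iSup_of_mem ⟨Y, hY⟩ ⟨⁅a, ⟨y, hyY⟩⁆,
      Subgroup.commutator_mem_commutator haY (Subgroup.mem_top _), map_commutatorElement ..⟩

theorem exists_fg_subset_iterVerbalComm {k : ℕ} {F : Set G} (hF : F.Finite)
    (hFw : F ⊆ iterCommSub G (verbalSubgroup w G) k) :
    ∃ X : Subgroup G, X.FG ∧ F ⊆ iterVerbalComm w k X := by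
  have : Nonempty {X : Subgroup G // X.FG} := ⟨⟨⊥, Subgroup.FG.bot⟩⟩
  lift F to Finset G using hF
  have hdir := directed_iterVerbalComm_fg (G := G) w k
  have hcover := hFw.trans (iterCommSub_le_iSup_iterVerbalComm w k)
  rw [Subgroup.coe_iSup_of_directed hdir] at hcover
  obtain ⟨⟨X, hX⟩, hFX⟩ := hdir.exists_mem_subset_of_finset_subset_biUnion hcover
  exact ⟨X, hX, hFX⟩

end Words

section Conciseness

variable {n : ℕ} {w : FreeGroup (Fin n)} {m : ℕ} {G H : Type*} [Group G] [Group H]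

theorem countable_of_group_fg [Group.FG G] : Countable G := by
  obtain ⟨S, hS, f, hf⟩ := Group.fg_iff_exists_freeGroup_hom_surjective.1 ‹Group.FG G›
  have := hS.to_subtype
  exact hf.countable

-- The image of `f` is shrunk into the universe `u` in which conciseness of `w` is assumed.
theorem IsFracConcise.finite_image_iterCommSub [Countable G] (hw : IsFracConcise.{u} w (m + 1))
    (f : G →* H) (hf : (f '' wValues w G).Finite) :
    (f '' (iterCommSub G (verbalSubgroup w G) m : Set G)).Finite := by
  have : Countable f.range := f.rangeRestrict_surjective.countable
  let e : Shrink.{u} f.range ≃* f.range := Shrink.mulEquiv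
  let π : G →* Shrink.{u} f.range := e.symm.toMonoidHom.comp f.rangeRestrict
  have hπ : Function.Surjective π := e.symm.surjective.comp f.rangeRestrict_surjective
  have heq (a b : G) : π a = π b ↔ f a = f b :=
    e.symm.injective.eq_iff.trans Subtype.ext_iff
  have hvalues : (wValues w (Shrink.{u} f.range)).Finite := by
    rw [← image_wValues_of_surjective w hπ]
    exact finite_image_of_factorsThrough (fun a b => (heq a b).2) hf
  refine finite_image_of_factorsThrough (fun a b => (heq a b).1) ((hw _ hvalues).subset ?_)
  exact map_iterCommSub_le π (map_verbalSubgroup_le w π) m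

theorem IsFracConcise.isFCSet_iterCommSub_of_fg [Group.FG G] (hw : IsFracConcise w (m + 1))
    (hG : IsFCSet (wValues w G)) :
    IsFCSet (iterCommSub G (verbalSubgroup w G) m : Set G) :=
  have : Countable G := countable_of_group_fg
  isFCSet_of_finite_image_conj (hw.finite_image_iterCommSub MulAut.conj hG.finite_image_conj)

theorem IsFracConcise.finite_conjSet_iterVerbalComm (hw : IsFracConcise w (m + 1))
    (hG : IsFCSet (wValues w G)) {X : Subgroup G} (hX : X.FG) {x : G} (hx : x ∈ X) :
    (conjSet x (iterVerbalComm w m X : Set G)).Finite := by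
  have := (Group.fg_iff_subgroup_fg X).2 hX
  have hXw : IsFCSet (wValues w X) := (hG.preimage X.subtype_injective).subset
    (Set.image_subset_iff.1 (image_wValues_subset w X.subtype))
  have hfin := (hw.isFCSet_iterCommSub_of_fg hXw ⟨x, hx⟩).image X.subtype
  rwa [image_conjSet] at hfin

end Conciseness

/-- Theorem A: if `w` is `(1/(m+1))`-concise and `G` is an `FC(w)`-group,
then `[w(G), G, ..., G]` (`G` repeated `m` times) is `FC`-embedded in `G`. -/
theorem statement_3 {n : ℕ} (m : ℕ) (w : FreeGroup (Fin n))
    (hw : IsFracConcise w (m + 1)) (G : Type*) [Group G] (hFC : IsFCw w G) :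
    IsFCEmbedded (iterCommSub G (verbalSubgroup w G) m) := by
  intro x
  obtain ⟨S, hS, hSc, hclosure⟩ :=
    IsFCSet.exists_closure_eq_iterCommSub hFC (isConjInvariant_wValues w) m
  obtain ⟨F, hFS, hF, hsub⟩ :=
    hSc.exists_finite_conjSet_closure_subset (hS.union (hS.inv hSc) x)
  obtain ⟨X, hX, hFX⟩ : ∃ X : Subgroup G, X.FG ∧ F ⊆ iterVerbalComm w m X :=
    exists_fg_subset_iterVerbalComm w hF
      (hFS.trans (Subgroup.subset_closure.trans hclosure.le))
  obtain ⟨Y, hY, hXY, hxY⟩ := exists_fg_le_mem hX x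
  have hFY : Subgroup.closure F ≤ iterVerbalComm w m Y :=
    (Subgroup.closure_le _).2 (hFX.trans (iterVerbalComm_mono w m hXY))
  have hfin : (conjSet x (iterVerbalComm w m Y : Set G)).Finite :=
    hw.finite_conjSet_iterVerbalComm hFC hY hxY
  rw [verbalSubgroup, ← hclosure]
  exact hfin.subset (hsub.trans (conjSet_mono x hFY))
end

section
/- Let w be a group-word in n variables and let v = [w(x_1,...,x_n), x_{n+1}, ..., x_{n+m}]. There exists a function f : ℕ → ℕ (depending only on w and m) such that: if G is a BFC(w)-group with |x^{G_w}| ≤ r for all x ∈ G, then G is a BFC(v)-group and |x^{G_v}| ≤ f(r) for all x ∈ G. -/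
/-! If every set `{g⁻¹ x g : g ∈ S}` has at most `r` elements, then among any `r + 1` elements of
`S` two conjugate a given `x` in the same way, so the centralizers of the quotients `g s⁻¹` of
distinct elements cover the group. By B. H. Neumann's covering lemma one such quotient has few
conjugates. Hence `S` lies in at most `r` translates `C s` of the set `C` of elements with few
conjugates.

On a single translate, conjugation by inverses is controlled as well. If `c, d ∈ C` satisfy
`c⁻¹ y c = d⁻¹ y d`, then `c = h d` with `h` centralizing `y`, so `⁅c, y⁆ = h ⁅d, y⁆ h⁻¹` lies in
the class of `⁅d, y⁆`, which is small because `⁅d, y⁆` is a quotient of two conjugates of `d`. So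
`{g x g⁻¹ : g ∈ S}` is bounded in terms of `r`. Finally, for `S` closed under conjugation,
conjugating by `[a, b] = a⁻¹ (b⁻¹ a b)` amounts to conjugating by the inverse of an element of `S`
and then by an element of `S`, so the bound survives each of the `m` commutators. -/

section Cardinality

variable {ι α : Type*}

theorem encard_biUnion_le_mul {A : Set ι} {B : ι → Set α} {k : ℕ∞}
    (hB : ∀ i ∈ A, (B i).encard ≤ k) : (⋃ i ∈ A, B i).encard ≤ A.encard * k := by
  rcases A.finite_or_infinite with hA | hA
  · lift A to Finset ι using hA
    calc (⋃ i ∈ A, B i).encard ≤ ∑ i ∈ A, (B i).encard := A.set_encard_biUnion_le B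
      _ ≤ A.card • k := Finset.sum_le_card_nsmul _ _ _ hB
      _ = (A : Set ι).encard * k := by rw [nsmul_eq_mul, Set.encard_coe_eq_coe_finsetCard]
  · rcases eq_or_ne k 0 with rfl | hk
    · simp_all
    · simp [hA.encard_eq, ENat.top_mul hk]

theorem exists_encard_le_dominating {R : α → α → Prop} (hrefl : ∀ a, R a a)
    (hsymm : ∀ a b, R a b → R b a) {S : Set α} {r : ℕ}
    (hS : ∀ T : Finset α, ↑T ⊆ S → T.card = r + 1 → ∃ a ∈ T, ∃ b ∈ T, a ≠ b ∧ R a b) :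
    ∃ T : Set α, T.encard ≤ r ∧ ∀ a ∈ S, ∃ b ∈ T, R a b := by
  -- A maximal set of pairwise unrelated elements is dominating.
  obtain ⟨T, ⟨⟨hTS, hT⟩, hmax⟩⟩ :=
    zorn_subset {T | T ⊆ S ∧ T.Pairwise fun a b => ¬R a b} fun c hcS hc =>
      ⟨⋃₀ c, ⟨Set.sUnion_subset fun T hT => (hcS hT).1,
        (Set.pairwise_sUnion hc.directedOn).2 fun T hT => (hcS hT).2⟩,
        fun T hT => Set.subset_sUnion_of_mem hT⟩
  refine ⟨T, ?_, fun a ha => ?_⟩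
  · by_contra! hcard
    obtain ⟨U, hUT, hU⟩ := Set.exists_subset_encard_eq (Order.add_one_le_of_lt hcard)
    lift U to Finset α using Set.finite_of_encard_eq_coe (k := r + 1) (mod_cast hU)
    obtain ⟨a, ha, b, hb, hab, hR⟩ := hS U (hUT.trans hTS)
      (by rw [Set.encard_coe_eq_coe_finsetCard] at hU; exact_mod_cast hU)
    exact hT (hUT ha) (hUT hb) hab hR
  · by_contra! hRa
    have haT : a ∉ T := fun haT => hRa a haT (hrefl a)
    have hins : (insert a T).Pairwise fun a b => ¬R a b :=
      hT.insert fun b hb _ => ⟨hRa b hb, fun h => hRa b hb (hsymm b a h)⟩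
    exact haT (hmax ⟨Set.insert_subset ha hTS, hins⟩ (Set.subset_insert a T)
      (Set.mem_insert a T))

end Cardinality

section ConjugacyClasses

open scoped Pointwise commutatorElement

variable {G : Type*} [Group G]

theorem encard_conjugatesOf_eq_index (a : G) [(Subgroup.centralizer {a}).FiniteIndex] :
    (conjugatesOf a).encard = (Subgroup.centralizer {a}).index := by
  have hindex : (Subgroup.centralizer {a}).index = (conjugatesOf a).ncard := by
    have h := MulAction.index_stabilizer (ConjAct G) a
    rw [ConjAct.stabilizer_eq_centralizer, ConjAct.orbit_eq_carrier_conjClasses] at h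
    exact h
  have hfin : (conjugatesOf a).Finite :=
    Set.finite_of_ncard_ne_zero (hindex ▸ Subgroup.FiniteIndex.index_ne_zero)
  rw [hindex, hfin.cast_ncard_eq]

theorem conjugatesOf_inv (a : G) : conjugatesOf a⁻¹ = (conjugatesOf a)⁻¹ := by
  ext b
  simp only [Set.mem_inv, conjugatesOf, Set.mem_ofPred_eq, isConj_iff]
  refine exists_congr fun g => ?_
  rw [← conj_inv, inv_eq_iff_eq_inv]

theorem encard_conjugatesOf_commutatorElement_le (a b : G) :
    (conjugatesOf ⁅a, b⁆).encard ≤ (conjugatesOf a).encard ^ 2 := by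
  have hsub : conjugatesOf ⁅a, b⁆ ⊆ conjugatesOf a * (conjugatesOf a)⁻¹ := by
    rintro c hc
    obtain ⟨g, rfl⟩ := isConj_iff.1 hc
    refine ⟨g * a * g⁻¹, isConj_iff.2 ⟨g, rfl⟩, (g * b) * a⁻¹ * (g * b)⁻¹, ?_, ?_⟩
    · rw [← conjugatesOf_inv]
      exact isConj_iff.2 ⟨g * b, rfl⟩
    · simp only [commutatorElement_def]
      group
  calc (conjugatesOf ⁅a, b⁆).encard ≤ (conjugatesOf a * (conjugatesOf a)⁻¹).encard :=
        Set.encard_le_encard hsub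
    _ ≤ (conjugatesOf a ×ˢ (conjugatesOf a)⁻¹).encard := by
        rw [← Set.image_mul_prod]
        exact Set.encard_image_le _ _
    _ = (conjugatesOf a).encard ^ 2 := by rw [Set.encard_prod, Set.encard_inv, sq]

theorem isConj_commutatorElement_of_conj_eq {c d y : G} (h : c⁻¹ * y * c = d⁻¹ * y * d) :
    IsConj ⁅d, y⁆ ⁅c, y⁆ := by
  refine isConj_iff.2 ⟨c * d⁻¹, ?_⟩
  calc c * d⁻¹ * ⁅d, y⁆ * (c * d⁻¹)⁻¹ = c * y * (d⁻¹ * y * d)⁻¹ * c⁻¹ := by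
        rw [commutatorElement_def]; group
    _ = ⁅c, y⁆ := by rw [← h, commutatorElement_def]; group

theorem exists_encard_conjugatesOf_mul_inv_le {T : Finset G}
    (hT : ∀ x : G, ∃ a ∈ T, ∃ b ∈ T, a ≠ b ∧ a⁻¹ * x * a = b⁻¹ * x * b) :
    ∃ a ∈ T, ∃ b ∈ T, a ≠ b ∧ (conjugatesOf (a * b⁻¹)).encard ≤ T.card ^ 2 := by
  classical
  have hcover : ⋃ p ∈ T.offDiag,
      (1 : G) • (Subgroup.centralizer {p.1 * p.2⁻¹} : Set G) = Set.univ := by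
    refine Set.eq_univ_of_forall fun x => ?_
    obtain ⟨a, ha, b, hb, hab, h⟩ := hT x
    simp only [one_smul, Set.mem_iUnion]
    refine ⟨(a, b), Finset.mem_offDiag.2 ⟨ha, hb, hab⟩, ?_⟩
    rw [SetLike.mem_coe, Subgroup.mem_centralizer_singleton_iff]
    calc x * (a * b⁻¹) = a * (a⁻¹ * x * a) * b⁻¹ := by group
      _ = a * b⁻¹ * x := by rw [h]; group
  obtain ⟨⟨a, b⟩, hp, hfin, hindex⟩ := Subgroup.exists_index_le_card_of_leftCoset_cover hcover
  obtain ⟨ha, hb, hab⟩ := Finset.mem_offDiag.1 hp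
  refine ⟨a, ha, b, hb, hab, ?_⟩
  rw [encard_conjugatesOf_eq_index]
  have hcard : T.offDiag.card ≤ T.card ^ 2 := by
    rw [Finset.offDiag_card, sq]
    exact Nat.sub_le _ _
  exact_mod_cast hindex.trans hcard

end ConjugacyClasses

section ConjSet

open scoped Pointwise commutatorElement

variable {G : Type*} [Group G]

theorem encard_conjSet_inv_le_of_encard_conjugatesOf_le {D : Set G} {k : ℕ∞}
    (hD : ∀ c ∈ D, (conjugatesOf c).encard ≤ k) (y : G) :
    (conjSet y D⁻¹).encard ≤ (conjSet y D).encard * k ^ 2 := by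
  obtain ⟨E, hED, hbij⟩ := Set.exists_subset_bijOn D fun g => g⁻¹ * y * g
  have hcover : conjSet y D⁻¹ ⊆ ⋃ d ∈ E, (· * y) '' conjugatesOf ⁅d, y⁆ := by
    rintro _ ⟨g, hg, rfl⟩
    obtain ⟨d, hd, hdg⟩ := hbij.surjOn ⟨g⁻¹, hg, rfl⟩
    refine Set.mem_biUnion hd ⟨⁅g⁻¹, y⁆, isConj_commutatorElement_of_conj_eq hdg.symm, ?_⟩
    simp [commutatorElement_def]
  calc (conjSet y D⁻¹).encard ≤ (⋃ d ∈ E, (· * y) '' conjugatesOf ⁅d, y⁆).encard :=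
        Set.encard_le_encard hcover
    _ ≤ E.encard * k ^ 2 := encard_biUnion_le_mul fun d hd =>
        calc ((· * y) '' conjugatesOf ⁅d, y⁆).encard ≤ (conjugatesOf ⁅d, y⁆).encard :=
              Set.encard_image_le _ _
          _ ≤ (conjugatesOf d).encard ^ 2 := encard_conjugatesOf_commutatorElement_le d y
          _ ≤ k ^ 2 := pow_le_pow_left' (hD d (hED hd)) 2
    _ = (conjSet y D).encard * k ^ 2 := by rw [← hbij.2.1.encard_image, hbij.image_eq, conjSet]

variable {S : Set G} {r : ℕ}

theorem exists_encard_le_conjugatesOf_mul_inv (hS : ∀ x : G, (conjSet x S).encard ≤ r) :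
    ∃ T : Set G, T.encard ≤ r ∧
      ∀ g ∈ S, ∃ s ∈ T, (conjugatesOf (g * s⁻¹)).encard ≤ (r + 1) ^ 2 := by
  refine exists_encard_le_dominating (R := fun g s => (conjugatesOf (g * s⁻¹)).encard ≤ (r + 1) ^ 2)
    (fun g => ?_) (fun g s h => ?_) fun T hTS hT => ?_
  · have hone : conjugatesOf (1 : G) = {1} := by ext; simp [conjugatesOf]
    simp only [mul_inv_cancel, hone, Set.encard_singleton]
    exact one_le_pow₀ le_add_self
  · rwa [← Set.encard_inv, ← conjugatesOf_inv, mul_inv_rev, inv_inv]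
  · have hcollision (x : G) : ∃ a ∈ T, ∃ b ∈ T, a ≠ b ∧ a⁻¹ * x * a = b⁻¹ * x * b := by
      obtain ⟨hfin, hcard⟩ := Set.encard_le_coe_iff_finite_ncard_le.1 (hS x)
      refine Finset.exists_ne_map_eq_of_card_lt_of_maps_to (t := hfin.toFinset) ?_
        fun g hg => hfin.mem_toFinset.2 ⟨g, hTS hg, rfl⟩
      rw [← Set.ncard_eq_toFinset_card _ hfin]
      omega
    simpa [hT] using exists_encard_conjugatesOf_mul_inv_le hcollision

theorem encard_conjSet_inv_le (hS : ∀ x : G, (conjSet x S).encard ≤ r) (x : G) :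
    (conjSet x S⁻¹).encard ≤ r ^ 2 * (r + 1) ^ 4 := by
  obtain ⟨T, hT, hrep⟩ := exists_encard_le_conjugatesOf_mul_inv hS
  let D (s : G) : Set G := {c | c * s ∈ S ∧ (conjugatesOf c).encard ≤ (r + 1) ^ 2}
  have hcover : conjSet x S⁻¹ ⊆ ⋃ s ∈ T, conjSet (s * x * s⁻¹) (D s)⁻¹ := by
    rintro _ ⟨g, hg, rfl⟩
    obtain ⟨s, hs, hclass⟩ := hrep g⁻¹ hg
    refine Set.mem_biUnion hs ⟨s * g, ⟨?_, ?_⟩, ?_⟩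
    · simpa using hg
    · simpa using hclass
    · group
  have hD (s : G) : (conjSet (s * x * s⁻¹) (D s)).encard ≤ r := by
    have hsub : conjSet (s * x * s⁻¹) (D s) ⊆
        (fun z => s * z * s⁻¹) '' conjSet (s * x * s⁻¹) S := by
      rintro _ ⟨c, hc, rfl⟩
      exact ⟨_, ⟨c * s, hc.1, rfl⟩, by group⟩
    exact (Set.encard_le_encard hsub).trans <| (Set.encard_image_le _ _).trans (hS _)
  calc (conjSet x S⁻¹).encard ≤ (⋃ s ∈ T, conjSet (s * x * s⁻¹) (D s)⁻¹).encard :=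
        Set.encard_le_encard hcover
    _ ≤ T.encard * (r * ((r + 1) ^ 2) ^ 2) := encard_biUnion_le_mul fun s _ =>
        (encard_conjSet_inv_le_of_encard_conjugatesOf_le (fun _ hc => hc.2) _).trans
          (mul_le_mul_left (hD s) _)
    _ ≤ r * (r * ((r + 1) ^ 2) ^ 2) := mul_le_mul_left hT _
    _ = r ^ 2 * (r + 1) ^ 4 := by ring

end ConjSet

section Commutators

variable {G : Type*} [Group G]

/-- The set of commutators `[a, b]` with `a ∈ S` and `b` arbitrary; its iterates on `G_w` are the
sets of values of the words `[w, x_{n+1}, ..., x_{n+m}]`. -/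
def pcommSet (S : Set G) : Set G := Set.image2 pcomm S Set.univ

/-- The bound for conjugation by `pcommSet S` obtained from a bound `r` for conjugation by `S`:
the bound `r ^ 2 * (r + 1) ^ 4` for conjugation by `S⁻¹`, times `r`. -/
def pcommBound (r : ℕ) : ℕ := r ^ 3 * (r + 1) ^ 4

variable {S : Set G}

theorem conjugatesOf_subset_pcommSet (hS : ∀ a ∈ S, conjugatesOf a ⊆ S) :
    ∀ a ∈ pcommSet S, conjugatesOf a ⊆ pcommSet S := by
  rintro _ ⟨a, ha, b, -, rfl⟩ c hc
  obtain ⟨g, rfl⟩ := isConj_iff.1 hc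
  refine ⟨g * a * g⁻¹, hS a ha (isConj_iff.2 ⟨g, rfl⟩), g * b * g⁻¹, Set.mem_univ _, ?_⟩
  simp only [pcomm]
  group

theorem encard_conjSet_pcommSet_le (hconj : ∀ a ∈ S, conjugatesOf a ⊆ S) {r : ℕ}
    (hS : ∀ x : G, (conjSet x S).encard ≤ r) (x : G) :
    (conjSet x (pcommSet S)).encard ≤ pcommBound r := by
  have hcover : conjSet x (pcommSet S) ⊆ ⋃ y ∈ conjSet x S⁻¹, conjSet y S := by
    rintro _ ⟨_, ⟨a, ha, b, -, rfl⟩, rfl⟩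
    refine Set.mem_biUnion ⟨a⁻¹, Set.inv_mem_inv.2 ha, rfl⟩
      ⟨b⁻¹ * a * b, hconj a ha (isConj_iff.2 ⟨b⁻¹, by group⟩), ?_⟩
    simp only [pcomm]
    group
  calc (conjSet x (pcommSet S)).encard ≤ (⋃ y ∈ conjSet x S⁻¹, conjSet y S).encard :=
        Set.encard_le_encard hcover
    _ ≤ (conjSet x S⁻¹).encard * r := encard_biUnion_le_mul fun y _ => hS y
    _ ≤ r ^ 2 * (r + 1) ^ 4 * r := mul_le_mul_left (encard_conjSet_inv_le hS x) _
    _ = pcommBound r := by push_cast [pcommBound]; ring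

theorem encard_conjSet_iterate_pcommSet_le (m : ℕ) (hconj : ∀ a ∈ S, conjugatesOf a ⊆ S) {r : ℕ}
    (hS : ∀ x : G, (conjSet x S).encard ≤ r) (x : G) :
    (conjSet x (pcommSet^[m] S)).encard ≤ (pcommBound^[m] r : ℕ) := by
  induction m generalizing S r with
  | zero => exact hS x
  | succ _ ih =>
    exact ih (conjugatesOf_subset_pcommSet hconj) (encard_conjSet_pcommSet_le hconj hS)

end Commutators

section Words

variable {G : Type*} [Group G] {n : ℕ}

theorem conjugatesOf_subset_wValues (w : FreeGroup (Fin n)) {a : G} (ha : a ∈ wValues w G) :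
    conjugatesOf a ⊆ wValues w G := by
  obtain ⟨v, rfl⟩ := ha
  rintro _ hc
  obtain ⟨g, rfl⟩ := isConj_iff.1 hc
  have hlift : FreeGroup.lift (fun i => g * v i * g⁻¹) =
      (MulAut.conj g).toMonoidHom.comp (FreeGroup.lift v) := by
    ext i
    simp
  exact ⟨fun i => g * v i * g⁻¹, DFunLike.congr_fun hlift w⟩

theorem map_pcomm {H : Type*} [Group H] (f : G →* H) (a b : G) :
    f (pcomm a b) = pcomm (f a) (f b) := by
  simp only [pcomm, map_mul, map_inv]

theorem map_foldl_pcomm {H : Type*} [Group H] (f : G →* H) (l : List G) (a : G) :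
    f (l.foldl pcomm a) = (l.map f).foldl pcomm (f a) := by
  rw [List.foldl_map]
  exact (List.foldl_hom f fun a b => (map_pcomm f a b).symm).symm

theorem commWord_zero (w : FreeGroup (Fin n)) : commWord 0 w = w :=
  FreeGroup.map.id w

theorem commWord_succ (m : ℕ) (w : FreeGroup (Fin n)) :
    commWord (m + 1) w = pcomm (FreeGroup.map Fin.castSucc (commWord m w))
      (FreeGroup.of (Fin.last (n + m))) := by
  have hbase : extendWord (m + 1) w = FreeGroup.map Fin.castSucc (extendWord m w) :=
    (FreeGroup.map.comp (Fin.castAdd m) Fin.castSucc w).symm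
  rw [commWord, List.ofFn_succ', List.concat_eq_append, List.foldl_append, commWord,
    map_foldl_pcomm, List.map_ofFn, hbase]
  rfl

theorem wValues_pcomm_of_last (u : FreeGroup (Fin n)) :
    wValues (pcomm (FreeGroup.map Fin.castSucc u) (FreeGroup.of (Fin.last n))) G =
      pcommSet (wValues u G) := by
  have hlift (v : Fin (n + 1) → G) :
      FreeGroup.lift v (pcomm (FreeGroup.map Fin.castSucc u) (FreeGroup.of (Fin.last n))) =
        pcomm (FreeGroup.lift (Fin.init v) u) (v (Fin.last n)) := by
    have hcomp : (FreeGroup.lift v).comp (FreeGroup.map Fin.castSucc) =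
        FreeGroup.lift (Fin.init v) := by
      ext i
      simp [Fin.init]
    rw [map_pcomm, FreeGroup.lift_apply_of, ← hcomp, MonoidHom.comp_apply]
  ext a
  constructor
  · rintro ⟨v, rfl⟩
    exact ⟨_, ⟨Fin.init v, rfl⟩, v (Fin.last n), Set.mem_univ _, (hlift v).symm⟩
  · rintro ⟨_, ⟨v, rfl⟩, b, -, rfl⟩
    exact ⟨Fin.snoc v b, by simp [hlift]⟩

theorem wValues_commWord (m : ℕ) (w : FreeGroup (Fin n)) :
    wValues (commWord m w) G = pcommSet^[m] (wValues w G) := by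
  induction m with
  | zero => rw [commWord_zero, Function.iterate_zero_apply]
  | succ m ih =>
    rw [commWord_succ, wValues_pcomm_of_last, ih, Function.iterate_succ_apply']

end Words

theorem statement_5_general (m : ℕ) :
    ∃ f : ℕ → ℕ, ∀ (r : ℕ) (G : Type*) [Group G] (S : Set G),
      (∀ a ∈ S, conjugatesOf a ⊆ S) →
      (∀ x : G, (conjSet x S).Finite ∧ (conjSet x S).ncard ≤ r) →
      ∀ x : G, (conjSet x (pcommSet^[m] S)).Finite ∧
        (conjSet x (pcommSet^[m] S)).ncard ≤ f r := by
  refine ⟨pcommBound^[m], fun r G _ S hconj hS => ?_⟩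
  simp only [← Set.encard_le_coe_iff_finite_ncard_le] at hS ⊢
  exact encard_conjSet_iterate_pcommSet_le m hconj hS

/-- there is `f : ℕ → ℕ` (depending only on `w` and `m`) such that if `G` is
a `BFC(w)`-group with `|x^{G_w}| ≤ r` for all `x`, then `G` is a `BFC(v)`-group with
`|x^{G_v}| ≤ f r` for all `x`, where `v = [w, x_{n+1}, ..., x_{n+m}]`. -/
theorem statement_5 {n : ℕ} (m : ℕ) (w : FreeGroup (Fin n)) :
    ∃ f : ℕ → ℕ, ∀ (r : ℕ) (G : Type*) [Group G],
      (∀ x : G, (conjSet x (wValues w G)).Finite ∧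
        (conjSet x (wValues w G)).ncard ≤ r) →
      ∀ x : G, (conjSet x (wValues (commWord m w) G)).Finite ∧
        (conjSet x (wValues (commWord m w) G)).ncard ≤ f r := by
  obtain ⟨f, hf⟩ := statement_5_general m
  refine ⟨f, fun r G _ h x => ?_⟩
  simpa only [wValues_commWord] using hf r G _ (fun _ => conjugatesOf_subset_wValues w) h x
end
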